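/- For any two vectors v, w ∈ T, the real inner product ⟨v,w⟩_ℝ lies in the set {−1, −τ/2, −1/2, −(τ−1)/2, 0, (τ−1)/2, 1/2, τ/2, 1}, where τ = (1+√5)/2 is the golden ratio; these are exactly the cosines of the angles occurring between roots of the non-crystallographic root system H₄. -/

import Mathlib

noncomputable section
open Real Complex

namespace Triacontagonal

/-- The golden ratio. -/
def τ : ℝ := (1 + Real.sqrt 5) / 2

/-- The constant 3^(-1/2) * 5^(-1/4). -/
def k0 : ℝ := (3 : ℝ) ^ (-(1:ℝ)/2) * (5 : ℝ) ^ (-(1:ℝ)/4)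

/-- `a` is the positive real with 2a² = 1 + 3^(-1/2)·5^(-1/4)·τ^(3/2). -/
def a : ℝ := Real.sqrt ((1 + k0 * τ ^ ((3:ℝ)/2)) / 2)

/-- `b` is the positive real with 2b² = 1 + 3^(-1/2)·5^(-1/4)·τ^(-3/2). -/
def b : ℝ := Real.sqrt ((1 + k0 * τ ^ (-((3:ℝ)/2))) / 2)

/-- `c` is the positive real with 2c² = 1 - 3^(-1/2)·5^(-1/4)·τ^(-3/2). -/
def c : ℝ := Real.sqrt ((1 - k0 * τ ^ (-((3:ℝ)/2))) / 2)

/-- `d` is the positive real with 2d² = 1 - 3^(-1/2)·5^(-1/4)·τ^(3/2). -/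
def d : ℝ := Real.sqrt ((1 - k0 * τ ^ ((3:ℝ)/2)) / 2)

/-- `ω = exp(iπ/30)`, a primitive 60th root of unity. -/
def ω : ℂ := Complex.exp (Real.pi * Complex.I / 30)

/-- The four cycles of 30 vectors each in ℂ², the H₄ root system. -/
def A (n : Fin 30) : Fin 2 → ℂ :=
  ![(a : ℂ) * ω ^ (2 * (n : ℕ)), (d : ℂ) * ω ^ (22 * (n : ℕ))]

def B (n : Fin 30) : Fin 2 → ℂ :=
  ![(b : ℂ) * ω ^ (2 * (n : ℕ) + 1), (c : ℂ) * ω ^ (22 * (n : ℕ) + 11)]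

def C (n : Fin 30) : Fin 2 → ℂ :=
  ![(c : ℂ) * ω ^ (2 * (n : ℕ) + 1), -((b : ℂ) * ω ^ (22 * (n : ℕ) + 11))]

def D (n : Fin 30) : Fin 2 → ℂ :=
  ![(d : ℂ) * ω ^ (2 * (n : ℕ)), -((a : ℂ) * ω ^ (22 * (n : ℕ)))]

/-- The set of the 120 vectors. -/
def T : Set (Fin 2 → ℂ) :=
  {v | ∃ n : Fin 30, v = A n ∨ v = B n ∨ v = C n ∨ v = D n}

/-- The real inner product on ℂ²: ⟨v,w⟩_ℝ = Re(Σᵢ vᵢ · conj(wᵢ)). -/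
def rinner (v w : Fin 2 → ℂ) : ℝ := (∑ i, v i * star (w i)).re

/-- The associated Euclidean norm. -/
def enorm (v : Fin 2 → ℂ) : ℝ := Real.sqrt (rinner v v)


def Good (x : ℝ) : Prop := x ∈
      ({-1, -(τ/2), -(1/2), -((τ-1)/2), 0, (τ-1)/2, 1/2, τ/2, 1} : Set ℝ)

lemma good_iff (x : ℝ) : Good x ↔ (x = -1 ∨ x = -(τ/2) ∨ x = -(1/2) ∨ x = -((τ-1)/2) ∨ x = 0 ∨
    x = (τ-1)/2 ∨ x = 1/2 ∨ x = τ/2 ∨ x = 1) := by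
  simp [Good]

def r : ℝ := Real.sqrt 5
def q : ℝ := Real.sqrt 3
def s : ℝ := Real.sin (π / 5)

lemma r_pos : 0 < r := by unfold r; positivity
lemma q_pos : 0 < q := by unfold q; positivity
lemma r_sq : r ^ 2 = 5 := by unfold r; norm_num
lemma q_sq : q ^ 2 = 3 := by unfold q; norm_num
lemma s_pos : 0 < s := Real.sin_pos_of_pos_of_lt_pi (by positivity) (by linarith [Real.pi_pos])
lemma cos5 : Real.cos (π / 5) = (1 + r) / 4 := by rw [Real.cos_pi_div_five]; rfl
lemma s_sq : s ^ 2 = (5 - r) / 8 := by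
  unfold s
  rw [Real.sin_sq, cos5]
  linear_combination (-1/16) * r_sq
lemma tau_eq : τ = (1 + r) / 2 := rfl
lemma r_gt : 2 < r := by nlinarith [r_sq, r_pos]
lemma r_lt : r < 3 := by nlinarith [r_sq, r_pos]
lemma sin25 : Real.sin (2 * π / 5) = (1 + r) / 2 * s := by
  rw [show 2 * π / 5 = 2 * (π / 5) by ring, Real.sin_two_mul, cos5]; unfold s; ring
lemma cos25 : Real.cos (2 * π / 5) = (r - 1) / 4 := by
  rw [show 2 * π / 5 = 2 * (π / 5) by ring, Real.cos_two_mul, cos5]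
  linear_combination (1/8) * r_sq
lemma sin45 : Real.sin (4 * π / 5) = s := by
  rw [show 4 * π / 5 = π - (π / 5) by ring, Real.sin_pi_sub]; rfl
lemma cos45 : Real.cos (4 * π / 5) = -(1 + r) / 4 := by
  rw [show 4 * π / 5 = π - (π / 5) by ring, Real.cos_pi_sub, cos5]; ring

def E5 (x y : ℝ) : Prop := (x = 1 ∧ y = 0) ∨ (x = (r-1)/4 ∧ y = (1+r)/2*s) ∨
  (x = (r-1)/4 ∧ y = -((1+r)/2*s)) ∨ (x = -(1+r)/4 ∧ y = s) ∨ (x = -(1+r)/4 ∧ y = -s)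

lemma trig5 (j : ℤ) : E5 (Real.cos (2 * π * j / 5)) (Real.sin (2 * π * j / 5)) := by
  obtain ⟨t, i, hj, hi⟩ : ∃ t i : ℤ, j = 5 * t + i ∧ (i = 0 ∨ i = 1 ∨ i = -1 ∨ i = 2 ∨ i = -2) := by
    have := Int.emod_nonneg (j + 2) (show (5:ℤ) ≠ 0 by norm_num)
    exact ⟨(j + 2) / 5, (j + 2) % 5 - 2, by omega, by omega⟩
  have h : 2 * π * (j:ℝ) / 5 = 2 * π * (i:ℝ) / 5 + t * (2 * π) := by
    rw [hj]; push_cast; ring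
  rw [h, Real.cos_add_int_mul_two_pi, Real.sin_add_int_mul_two_pi]
  unfold E5
  rcases hi with rfl | rfl | rfl | rfl | rfl
  · left; simp
  · right; left
    rw [show 2 * π * ((1:ℤ):ℝ) / 5 = 2 * π / 5 by push_cast; ring]
    exact ⟨cos25, sin25⟩
  · right; right; left
    rw [show 2 * π * ((-1:ℤ):ℝ) / 5 = -(2 * π / 5) by push_cast; ring, Real.cos_neg, Real.sin_neg,
      cos25, sin25]
    exact ⟨rfl, rfl⟩
  · right; right; right; left
    rw [show 2 * π * ((2:ℤ):ℝ) / 5 = 4 * π / 5 by push_cast; ring]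
    exact ⟨cos45, sin45⟩
  · right; right; right; right
    rw [show 2 * π * ((-2:ℤ):ℝ) / 5 = -(4 * π / 5) by push_cast; ring, Real.cos_neg, Real.sin_neg,
      cos45, sin45]
    exact ⟨rfl, rfl⟩

lemma trig5odd (j : ℤ) : E5 (-Real.cos (π * (2 * j + 1) / 5)) (-Real.sin (π * (2 * j + 1) / 5)) := by
  have h := trig5 (j + 3)
  rw [show 2 * π * ((j + 3 : ℤ) : ℝ) / 5 = π * (2 * j + 1) / 5 + π by push_cast; ring,
    Real.cos_add_pi, Real.sin_add_pi] at h
  exact h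

def E6 (x y : ℝ) : Prop := (x = 1 ∨ x = -1) ∧ y = 0 ∨ (x = 1/2 ∨ x = -(1/2)) ∧ (y = q/2 ∨ y = -(q/2))
def O6 (x y : ℝ) : Prop := x = 0 ∧ (y = 1 ∨ y = -1) ∨ (x = q/2 ∨ x = -(q/2)) ∧ (y = 1/2 ∨ y = -(1/2))

lemma trig6 (j : ℤ) : E6 (Real.cos (π * j / 3)) (Real.sin (π * j / 3)) := by
  obtain ⟨t, i, hj, hi⟩ : ∃ t i : ℤ, j = 6 * t + i ∧
      (i = 0 ∨ i = 1 ∨ i = -1 ∨ i = 2 ∨ i = -2 ∨ i = 3) := by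
    have := Int.emod_nonneg (j + 2) (show (6:ℤ) ≠ 0 by norm_num)
    exact ⟨(j + 2) / 6, (j + 2) % 6 - 2, by omega, by omega⟩
  have h : π * (j:ℝ) / 3 = π * (i:ℝ) / 3 + t * (2 * π) := by
    rw [hj]; push_cast; ring
  rw [h, Real.cos_add_int_mul_two_pi, Real.sin_add_int_mul_two_pi]
  have e2 : (2:ℝ) * π / 3 = π - π / 3 := by ring
  unfold E6 q
  rcases hi with rfl | rfl | rfl | rfl | rfl | rfl
  · simp
  · rw [show π * ((1:ℤ):ℝ) / 3 = π / 3 by push_cast; ring, Real.cos_pi_div_three,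
      Real.sin_pi_div_three]; simp
  · rw [show π * ((-1:ℤ):ℝ) / 3 = -(π / 3) by push_cast; ring, Real.cos_neg, Real.sin_neg,
      Real.cos_pi_div_three, Real.sin_pi_div_three]; simp
  · rw [show π * ((2:ℤ):ℝ) / 3 = π - π / 3 by push_cast; ring, Real.cos_pi_sub, Real.sin_pi_sub,
      Real.cos_pi_div_three, Real.sin_pi_div_three]; simp
  · rw [show π * ((-2:ℤ):ℝ) / 3 = -(π - π / 3) by push_cast; ring, Real.cos_neg, Real.sin_neg,
      Real.cos_pi_sub, Real.sin_pi_sub, Real.cos_pi_div_three, Real.sin_pi_div_three]; simp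
  · rw [show π * ((3:ℤ):ℝ) / 3 = π by push_cast; ring]; simp

lemma trig6odd (j : ℤ) : O6 (Real.cos (π * (2 * j + 1) / 6)) (Real.sin (π * (2 * j + 1) / 6)) := by
  have h := trig6 (j - 1)
  rw [show π * ((j - 1 : ℤ) : ℝ) / 3 = π * (2 * j + 1) / 6 - π / 2 by push_cast; ring,
    Real.cos_sub_pi_div_two, Real.sin_sub_pi_div_two] at h
  unfold E6 at h
  unfold O6
  rcases h with ⟨h1, h2⟩ | ⟨h1, h2 | h2⟩
  · left; exact ⟨by linarith, h1⟩
  · right; exact ⟨Or.inr (by linarith), h1⟩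
  · right; exact ⟨Or.inl (by linarith), h1⟩

lemma prod_formula (P Q x : ℝ) : P * Real.cos x + Q * Real.cos (11 * x) =
    (P + Q) * (Real.cos (6 * x) * Real.cos (5 * x)) +
    (P - Q) * (Real.sin (6 * x) * Real.sin (5 * x)) := by
  have h1 : Real.cos x = Real.cos (6 * x - 5 * x) := by congr 1; ring
  have h2 : Real.cos (11 * x) = Real.cos (6 * x + 5 * x) := by congr 1; ring
  rw [h1, h2, Real.cos_add, Real.cos_sub]; ring


lemma good_neg {x : ℝ} (h : Good x) : Good (-x) := by
  rw [good_iff] at *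
  rcases h with h | h | h | h | h | h | h | h | h <;> rw [h] <;> simp

lemma E5_neg {x y : ℝ} (h : E5 x y) : E5 x (-y) := by
  unfold E5 at *
  rcases h with h | h | h | h | h <;> rw [h.1, h.2] <;> simp

set_option maxHeartbeats 4000000 in
lemma even_core0 (S D x y c5 s5 c6 s6 : ℝ)
    (h1 : D * (q * s) = x) (h2 : D * (q * ((1+r)/2*s)) = y)
    (hh : (S = 1 ∧ x = (1+r)/4 ∧ y = (3+r)/4) ∨
      (S = 1 ∧ x = (3-r)/4 ∧ y = (r-1)/4) ∨
      (S = 0 ∧ x = (r-1)/2 ∧ y = 1) ∨ (S = 0 ∧ x = 1 ∧ y = (1+r)/2))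
    (h5 : E5 c5 s5) (h6 : (c6 = 1 ∧ s6 = 0) ∨ (c6 = 1/2 ∧ s6 = q/2)) : Good (S * (c5 * c6) + D * (s5 * s6)) := by
  rw [good_iff, tau_eq]
  unfold E5 at h5
  rcases hh with ⟨rfl, rfl, rfl⟩ | ⟨rfl, rfl, rfl⟩ | ⟨rfl, rfl, rfl⟩ | ⟨rfl, rfl, rfl⟩ <;>
  rcases h5 with ⟨rfl, rfl⟩ | ⟨rfl, rfl⟩ | ⟨rfl, rfl⟩ | ⟨rfl, rfl⟩ | ⟨rfl, rfl⟩ <;>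
  rcases h6 with ⟨rfl, rfl⟩ | ⟨rfl, rfl⟩ <;>
  first
  | (iterate 4 right); left; linarith
  | (iterate 3 right); left; linarith
  | (iterate 5 right); left; linarith
  | (iterate 1 right); left; linarith
  | (iterate 2 right); left; linarith
  | (iterate 6 right); left; linarith
  | (iterate 7 right); left; linarith
  | left; linarith
  | (iterate 8 right); linarith

set_option maxHeartbeats 4000000 in
lemma odd_core0 (S D z x y c5 s5 c6 s6 : ℝ) (h0 : S * q = z)
    (h1 : D * s = x) (h2 : D * ((1+r)/2*s) = y)
    (hh : (z = (1+r)/2 ∧ x = (r-1)/4 ∧ y = 1/2) ∨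
      (z = (r-1)/2 ∧ x = 1/2 ∧ y = (1+r)/4))
    (h5 : E5 (-c5) (-s5)) (h6 : (c6 = 0 ∧ s6 = 1) ∨ (c6 = q/2 ∧ s6 = 1/2)) : Good (S * (c5 * c6) + D * (s5 * s6)) := by
  rw [good_iff, tau_eq]
  unfold E5 at h5
  have h3 : S * q * r = z * r := by rw [h0]
  have hr := r_sq
  have e1 : c5 = -(-c5) := by ring
  have e2 : s5 = -(-s5) := by ring
  rw [e1, e2]
  generalize -c5 = c5' at *
  generalize -s5 = s5' at *
  clear e1 e2
  rcases hh with ⟨rfl, rfl, rfl⟩ | ⟨rfl, rfl, rfl⟩ <;>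
  rcases h5 with ⟨rfl, rfl⟩ | ⟨rfl, rfl⟩ | ⟨rfl, rfl⟩ | ⟨rfl, rfl⟩ | ⟨rfl, rfl⟩ <;>
  rcases h6 with ⟨rfl, rfl⟩ | ⟨rfl, rfl⟩ <;>
  first
  | (iterate 4 right); left; linarith
  | (iterate 3 right); left; linarith
  | (iterate 5 right); left; linarith
  | (iterate 1 right); left; linarith
  | (iterate 2 right); left; linarith
  | (iterate 6 right); left; linarith
  | (iterate 7 right); left; linarith
  | left; linarith
  | (iterate 8 right); linarith


lemma even_core (S D x y c5 s5 c6 s6 : ℝ)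
    (h1 : D * (q * s) = x) (h2 : D * (q * ((1+r)/2*s)) = y)
    (hh : (S = 1 ∧ x = (1+r)/4 ∧ y = (3+r)/4) ∨
      (S = 1 ∧ x = (3-r)/4 ∧ y = (r-1)/4) ∨
      (S = 0 ∧ x = (r-1)/2 ∧ y = 1) ∨ (S = 0 ∧ x = 1 ∧ y = (1+r)/2))
    (h5 : E5 c5 s5) (h6 : E6 c6 s6) : Good (S * (c5 * c6) + D * (s5 * s6)) := by
  have p1 := fun u v h => even_core0 S D x y c5 s5 u v h1 h2 hh h5 h
  have p2 := fun u v h => even_core0 S D x y c5 (-s5) u v h1 h2 hh (E5_neg h5) h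
  have a1 := p1 1 0 (Or.inl ⟨rfl, rfl⟩)
  have a2 := p1 (1/2) (q/2) (Or.inr ⟨rfl, rfl⟩)
  have a3 := p2 (1/2) (q/2) (Or.inr ⟨rfl, rfl⟩)
  rcases h6 with ⟨rfl | rfl, rfl⟩ | ⟨rfl | rfl, rfl | rfl⟩
  · exact a1
  · convert good_neg a1 using 1; ring
  · exact a2
  · convert a3 using 1; ring
  · convert good_neg a3 using 1; ring
  · convert good_neg a2 using 1; ring

lemma odd_core (S D z x y c5 s5 c6 s6 : ℝ) (h0 : S * q = z)
    (h1 : D * s = x) (h2 : D * ((1+r)/2*s) = y)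
    (hh : (z = (1+r)/2 ∧ x = (r-1)/4 ∧ y = 1/2) ∨
      (z = (r-1)/2 ∧ x = 1/2 ∧ y = (1+r)/4))
    (h5 : E5 (-c5) (-s5)) (h6 : O6 c6 s6) : Good (S * (c5 * c6) + D * (s5 * s6)) := by
  have p1 := fun u v h => odd_core0 S D z x y c5 s5 u v h0 h1 h2 hh h5 h
  have p2 := fun u v h => odd_core0 S D z x y c5 (-s5) u v h0 h1 h2 hh (E5_neg h5) h
  have a1 := p1 0 1 (Or.inl ⟨rfl, rfl⟩)
  have a2 := p1 (q/2) (1/2) (Or.inr ⟨rfl, rfl⟩)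
  have a3 := p2 (q/2) (1/2) (Or.inr ⟨rfl, rfl⟩)
  rcases h6 with ⟨rfl, rfl | rfl⟩ | ⟨rfl | rfl, rfl | rfl⟩
  · exact a1
  · convert good_neg a1 using 1; ring
  · exact a2
  · convert a3 using 1; ring
  · convert good_neg a3 using 1; ring
  · convert good_neg a2 using 1; ring

lemma even_good (P Q : ℝ) (j : ℤ) (D x y : ℝ) (hD : P - Q = D)
    (h1 : D * (q * s) = x) (h2 : D * (q * ((1+r)/2*s)) = y)
    (hh : (P + Q = 1 ∧ x = (1+r)/4 ∧ y = (3+r)/4) ∨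
      (P + Q = 1 ∧ x = (3-r)/4 ∧ y = (r-1)/4) ∨
      (P + Q = 0 ∧ x = (r-1)/2 ∧ y = 1) ∨ (P + Q = 0 ∧ x = 1 ∧ y = (1+r)/2)) :
    Good (P * Real.cos (π * (2 * j) / 30) + Q * Real.cos (11 * (π * (2 * j) / 30))) ∧
    Good (Q * Real.cos (π * (2 * j) / 30) + P * Real.cos (11 * (π * (2 * j) / 30))) := by
  have hD' : Q - P = -D := by rw [← hD]; ring
  rw [prod_formula, prod_formula, hD, hD', add_comm Q P,
    show 6 * (π * (2 * (j:ℝ)) / 30) = 2 * π * j / 5 by ring,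
    show 5 * (π * (2 * (j:ℝ)) / 30) = π * j / 3 by ring]
  refine ⟨even_core _ D x y _ _ _ _ h1 h2 hh (trig5 j) (trig6 j), ?_⟩
  have := even_core _ D x y _ _ _ _ h1 h2 hh (E5_neg (trig5 j)) (trig6 j)
  convert this using 1
  ring

lemma odd_good (P Q : ℝ) (j : ℤ) (S D z x y : ℝ) (hS : P + Q = S) (hD : P - Q = D) (h0 : S * q = z)
    (h1 : D * s = x) (h2 : D * ((1+r)/2*s) = y)
    (hh : (z = (1+r)/2 ∧ x = (r-1)/4 ∧ y = 1/2) ∨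
      (z = (r-1)/2 ∧ x = 1/2 ∧ y = (1+r)/4)) :
    Good (P * Real.cos (π * (2 * j + 1) / 30) + Q * Real.cos (11 * (π * (2 * j + 1) / 30))) ∧
    Good (Q * Real.cos (π * (2 * j + 1) / 30) + P * Real.cos (11 * (π * (2 * j + 1) / 30))) := by
  have hD' : Q - P = -D := by rw [← hD]; ring
  rw [prod_formula, prod_formula, hD, hD', add_comm Q P, hS,
    show 6 * (π * (2 * (j:ℝ) + 1) / 30) = π * (2 * j + 1) / 5 by ring,
    show 5 * (π * (2 * (j:ℝ) + 1) / 30) = π * (2 * j + 1) / 6 by ring]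
  refine ⟨odd_core _ D z x y _ _ _ _ h0 h1 h2 hh (trig5odd j) (trig6odd j), ?_⟩
  have := odd_core _ D z x y _ (-Real.sin (π * (2 * j + 1) / 5)) _ _ h0 h1 h2 hh
    (E5_neg (trig5odd j)) (trig6odd j)
  convert this using 1
  ring

lemma tau_pos : 0 < τ := by rw [tau_eq]; linarith [r_pos]

lemma tau_cube : τ ^ 3 = 2 + r := by
  rw [tau_eq]
  linear_combination (3/8 + r/8) * r_sq

lemma k0_pos : 0 < k0 := by unfold k0; positivity

lemma k0_sq : k0 ^ 2 = r / 15 := by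
  have h3 : ((3:ℝ) ^ (-(1:ℝ)/2)) ^ 2 = 1 / 3 := by
    rw [← Real.rpow_natCast, ← Real.rpow_mul (by norm_num)]
    norm_num [Real.rpow_neg_one]
  have h5 : ((5:ℝ) ^ (-(1:ℝ)/4)) ^ 2 = r⁻¹ := by
    rw [← Real.rpow_natCast, ← Real.rpow_mul (by norm_num)]
    unfold r
    rw [Real.sqrt_eq_rpow, ← Real.rpow_neg (by norm_num)]
    norm_num
  have hr := r_pos
  unfold k0
  rw [mul_pow, h3, h5]
  field_simp
  linear_combination (-3) * r_sq

lemma K_eq : k0 * τ ^ ((3:ℝ)/2) = s * q * (5 + 3 * r) / 15 := by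
  have hs := s_pos
  have hq := q_pos
  have hr := r_pos
  have hk := k0_pos
  have ht := tau_pos
  refine (sq_eq_sq₀ (by positivity) (by positivity)).1 ?_
  have : (τ ^ ((3:ℝ)/2)) ^ 2 = 2 + r := by
    rw [← tau_cube, ← Real.rpow_natCast, ← Real.rpow_mul ht.le, ← Real.rpow_natCast]
    norm_num
  rw [mul_pow, this, k0_sq, div_pow, mul_pow, mul_pow, q_sq, s_sq]
  linear_combination (1 / 15 + 3 * (9 * r - 15) / 1800) * r_sq

lemma L_eq : k0 * τ ^ (-((3:ℝ)/2)) = s * q * (5 - r) / 15 := by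
  have ht := tau_pos
  have h : τ ^ (-((3:ℝ)/2)) = τ ^ ((3:ℝ)/2) / τ ^ 3 := by
    rw [← Real.rpow_natCast, ← Real.rpow_sub ht]; norm_num
  have hr := r_pos
  rw [h, ← mul_div_assoc, K_eq, tau_cube]
  field_simp
  linear_combination s * q * r_sq

lemma K_sq : (s * q * (5 + 3 * r) / 15) ^ 2 = (5 + 2 * r) / 15 := by
  rw [div_pow, mul_pow, mul_pow, q_sq, s_sq]
  linear_combination (- 3 * (9 * r - 15) / 1800) * r_sq
lemma L_sq : (s * q * (5 - r) / 15) ^ 2 = (5 - 2 * r) / 15 := by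
  rw [div_pow, mul_pow, mul_pow, q_sq, s_sq]
  linear_combination (3 * (15 - r) / 1800) * r_sq

lemma K_lt : s * q * (5 + 3 * r) / 15 < 1 := by
  have := K_sq
  have := r_lt
  nlinarith
lemma L_lt : s * q * (5 - r) / 15 < 1 := by
  have := L_sq
  have := r_pos
  nlinarith
lemma K_pos : 0 < s * q * (5 + 3 * r) / 15 := by
  have hs := s_pos
  have hq := q_pos
  have hr := r_pos
  positivity
lemma L_pos : 0 < s * q * (5 - r) / 15 := by
  have hs := s_pos
  have hq := q_pos
  have hr : 0 < 5 - r := by linarith [r_lt]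
  positivity

lemma a_sq : a ^ 2 = (1 + s * q * (5 + 3 * r) / 15) / 2 := by
  unfold a; rw [K_eq, Real.sq_sqrt]; linarith [K_pos]
lemma b_sq : b ^ 2 = (1 + s * q * (5 - r) / 15) / 2 := by
  unfold b; rw [L_eq, Real.sq_sqrt]; linarith [L_pos]
lemma c_sq : c ^ 2 = (1 - s * q * (5 - r) / 15) / 2 := by
  unfold c; rw [L_eq, Real.sq_sqrt]; linarith [L_lt]
lemma d_sq : d ^ 2 = (1 - s * q * (5 + 3 * r) / 15) / 2 := by
  unfold d; rw [K_eq, Real.sq_sqrt]; linarith [K_lt]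
lemma a_pos : 0 < a := by
  unfold a; rw [K_eq]; apply Real.sqrt_pos.2; linarith [K_pos]
lemma b_pos : 0 < b := by
  unfold b; rw [L_eq]; apply Real.sqrt_pos.2; linarith [L_pos]
lemma c_pos : 0 < c := by
  unfold c; rw [L_eq]; apply Real.sqrt_pos.2; linarith [L_lt]
lemma d_pos : 0 < d := by
  unfold d; rw [K_eq]; apply Real.sqrt_pos.2; linarith [K_lt]

lemma ad_eq : a * d = 2 * s * q * r / 15 := by
  have hs := s_pos
  have hq := q_pos
  have hr := r_pos
  have ha := a_pos
  have hd := d_pos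
  refine (sq_eq_sq₀ (by positivity) (by positivity)).1 ?_
  have e : (2 * s * q * r / 15) ^ 2 = 4 / 225 * s ^ 2 * q ^ 2 * r ^ 2 := by ring
  rw [mul_pow, a_sq, d_sq, e, s_sq, q_sq, r_sq]
  linear_combination (-1/4) * K_sq

lemma bc_eq : b * c = (1 + r) * s * q * r / 15 := by
  have hs := s_pos
  have hq := q_pos
  have hr := r_pos
  have ha := b_pos
  have hd := c_pos
  refine (sq_eq_sq₀ (by positivity) (by positivity)).1 ?_
  have e : ((1 + r) * s * q * r / 15) ^ 2 = 1 / 225 * s ^ 2 * q ^ 2 * r ^ 2 * (1 + 2 * r + r ^ 2) := by ring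
  rw [mul_pow, b_sq, c_sq, e, s_sq, q_sq, r_sq]
  linear_combination (-1/4) * L_sq + (1/60) * r_sq

lemma KL : (s * q * (5 + 3 * r) / 15) * (s * q * (5 - r) / 15) = r / 15 := by
  have e : (s * q * (5 + 3 * r) / 15) * (s * q * (5 - r) / 15) =
    s ^ 2 * q ^ 2 * (25 + 10 * r - 3 * r ^ 2) / 225 := by ring
  rw [e, s_sq, q_sq, r_sq]
  linear_combination (-1/60) * r_sq

lemma adbc : a * d * (b * c) = r / 15 := by
  rw [ad_eq, bc_eq]
  have e : 2 * s * q * r / 15 * ((1 + r) * s * q * r / 15) =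
    2 / 225 * s ^ 2 * q ^ 2 * r ^ 2 * (1 + r) := by ring
  rw [e, s_sq, q_sq, r_sq]
  linear_combination (-1/60) * r_sq

lemma S1 : a * b + c * d = (1 + r) * q / 6 := by
  have hq := q_pos
  have hr := r_pos
  have ha := a_pos
  have hb := b_pos
  have hc := c_pos
  have hd := d_pos
  refine (sq_eq_sq₀ (by positivity) (by positivity)).1 ?_
  have e : (a * b + c * d) ^ 2 = a ^ 2 * b ^ 2 + c ^ 2 * d ^ 2 + 2 * (a * d * (b * c)) := by ring
  rw [e, adbc, a_sq, b_sq, c_sq, d_sq, div_pow, mul_pow, q_sq]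
  linear_combination (1/2) * KL - (1/12) * r_sq

lemma S2 : a * c + b * d = (1 + r) * s * r / 5 := by
  have hs := s_pos
  have hr := r_pos
  have ha := a_pos
  have hb := b_pos
  have hc := c_pos
  have hd := d_pos
  refine (sq_eq_sq₀ (by positivity) (by positivity)).1 ?_
  have e : (a * c + b * d) ^ 2 = a ^ 2 * c ^ 2 + b ^ 2 * d ^ 2 + 2 * (a * d * (b * c)) := by ring
  rw [e, adbc, a_sq, b_sq, c_sq, d_sq, div_pow, mul_pow, mul_pow, s_sq, r_sq]
  linear_combination (-1/2) * KL + (- 3 / 40 + r / 40) * r_sq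

lemma D1 : a * b - c * d = 2 * s * r / 5 := by
  have hq := q_pos
  have hr := r_pos
  have h0 : (1 + r) * q / 6 ≠ 0 := by positivity
  apply mul_left_cancel₀ h0
  rw [← S1]
  have e : (a * b + c * d) * (a * b - c * d) = a ^ 2 * b ^ 2 - c ^ 2 * d ^ 2 := by ring
  rw [e, S1, a_sq, b_sq, c_sq, d_sq]
  linear_combination (-s*q/15) * r_sq

lemma D2 : a * c - b * d = (r - 1) * q / 6 := by
  have hs := s_pos
  have hr := r_pos
  have h0 : (1 + r) * s * r / 5 ≠ 0 := by positivity
  apply mul_left_cancel₀ h0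
  rw [← S2]
  have e : (a * c + b * d) * (a * c - b * d) = a ^ 2 * c ^ 2 - b ^ 2 * d ^ 2 := by ring
  rw [e, S2, a_sq, b_sq, c_sq, d_sq]
  linear_combination (-s*q*r/30) * r_sq

lemma qs2 : q ^ 2 * s ^ 2 = 3 * (5 - r) / 8 := by rw [q_sq, s_sq]; ring

lemma goodAA (j : ℤ) :
    Good ((a * a) * Real.cos (π * (2 * (j:ℝ)) / 30) + (d * d) * Real.cos (11 * (π * (2 * (j:ℝ)) / 30))) ∧
    Good ((d * d) * Real.cos (π * (2 * (j:ℝ)) / 30) + (a * a) * Real.cos (11 * (π * (2 * (j:ℝ)) / 30))) :=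
  even_good (a * a) (d * d) j (a * a - d * d) _ _ rfl rfl rfl (Or.inl
  ⟨by linear_combination a_sq + d_sq,
   by linear_combination (q * s) * (a_sq - d_sq) + (5 + 3 * r) / 15 * qs2 - 3 / 40 * r_sq,
   by linear_combination (q * s * (1 + r) / 2) * (a_sq - d_sq) + (1 + r) / 2 * (5 + 3 * r) / 15 * qs2
        + (-(3 * r - 7) / 80) * r_sq⟩)
lemma goodBB (j : ℤ) :
    Good ((b * b) * Real.cos (π * (2 * (j:ℝ)) / 30) + (c * c) * Real.cos (11 * (π * (2 * (j:ℝ)) / 30))) ∧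
    Good ((c * c) * Real.cos (π * (2 * (j:ℝ)) / 30) + (b * b) * Real.cos (11 * (π * (2 * (j:ℝ)) / 30))) :=
  even_good (b * b) (c * c) j (b * b - c * c) _ _ rfl rfl rfl (Or.inr (Or.inl
  ⟨by linear_combination b_sq + c_sq,
   by linear_combination (q * s) * (b_sq - c_sq) + (5 - r) / 15 * qs2 + 1 / 40 * r_sq,
   by linear_combination (q * s * (1 + r) / 2) * (b_sq - c_sq) + (1 + r) / 2 * (5 - r) / 15 * qs2
        + (r - 9) / 80 * r_sq⟩))
lemma goodAD (j : ℤ) :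
    Good ((a * d) * Real.cos (π * (2 * (j:ℝ)) / 30) + (-(a * d)) * Real.cos (11 * (π * (2 * (j:ℝ)) / 30))) ∧
    Good ((-(a * d)) * Real.cos (π * (2 * (j:ℝ)) / 30) + (a * d) * Real.cos (11 * (π * (2 * (j:ℝ)) / 30))) :=
  even_good (a * d) (-(a * d)) j (a * d - -(a * d)) _ _ rfl rfl rfl
  (Or.inr (Or.inr (Or.inl
  ⟨by ring,
   by linear_combination (2 * q * s) * ad_eq + 4 * r / 15 * qs2 - 1 / 10 * r_sq,
   by linear_combination (q * s * (1 + r)) * ad_eq + (1 + r) / 2 * 4 * r / 15 * qs2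
        + (-r / 20 + 1 / 5) * r_sq⟩)))
lemma goodBC (j : ℤ) :
    Good ((b * c) * Real.cos (π * (2 * (j:ℝ)) / 30) + (-(b * c)) * Real.cos (11 * (π * (2 * (j:ℝ)) / 30))) ∧
    Good ((-(b * c)) * Real.cos (π * (2 * (j:ℝ)) / 30) + (b * c) * Real.cos (11 * (π * (2 * (j:ℝ)) / 30))) :=
  even_good (b * c) (-(b * c)) j (b * c - -(b * c)) _ _ rfl rfl rfl
  (Or.inr (Or.inr (Or.inr
  ⟨by ring,
   by linear_combination (2 * q * s) * bc_eq + 2 * (1 + r) * r / 15 * qs2 + (-r / 20 + 1 / 5) * r_sq,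
   by linear_combination (q * s * (1 + r)) * bc_eq + (1 + r) ^ 2 * r / 15 * qs2
        + (-r ^ 2 / 40 + 3 * r / 40 + 1 / 10) * r_sq⟩)))
lemma goodAB (j : ℤ) :
    Good ((a * b) * Real.cos (π * (2 * (j:ℝ) + 1) / 30) + (c * d) * Real.cos (11 * (π * (2 * (j:ℝ) + 1) / 30))) ∧
    Good ((c * d) * Real.cos (π * (2 * (j:ℝ) + 1) / 30) + (a * b) * Real.cos (11 * (π * (2 * (j:ℝ) + 1) / 30))) :=
  odd_good (a * b) (c * d) j _ _ _ _ _ S1 D1 rfl rfl rfl (Or.inl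
  ⟨by linear_combination (1 + r) / 6 * q_sq,
   by linear_combination 2 * r / 5 * s_sq - 1 / 20 * r_sq,
   by linear_combination (1 + r) * r / 5 * s_sq + (-r / 40 + 1 / 10) * r_sq⟩)
lemma D2' : a * c + -(b * d) = (r - 1) * q / 6 := by rw [← D2]; ring
lemma S2' : a * c - -(b * d) = (1 + r) * s * r / 5 := by rw [← S2]; ring
lemma goodAC (j : ℤ) :
    Good ((a * c) * Real.cos (π * (2 * (j:ℝ) + 1) / 30) + (-(b * d)) * Real.cos (11 * (π * (2 * (j:ℝ) + 1) / 30))) ∧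
    Good ((-(b * d)) * Real.cos (π * (2 * (j:ℝ) + 1) / 30) + (a * c) * Real.cos (11 * (π * (2 * (j:ℝ) + 1) / 30))) :=
  odd_good (a * c) (-(b * d)) j _ _ _ _ _ D2' S2' rfl rfl rfl (Or.inr
  ⟨by linear_combination (r - 1) / 6 * q_sq,
   by linear_combination (1 + r) * r / 5 * s_sq + (-r / 40 + 1 / 10) * r_sq,
   by linear_combination (1 + r) ^ 2 * r / 10 * s_sq + (-r ^ 2 / 80 + 3 * r / 80 + 1 / 20) * r_sq⟩)

lemma omega_pow (k : ℕ) : ω ^ k = ((Real.cos (π * k / 30) : ℝ) : ℂ) + (Real.sin (π * k / 30) : ℝ) * Complex.I := by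
  unfold ω
  rw [← Complex.exp_nat_mul, Complex.ofReal_cos, Complex.ofReal_sin, ← Complex.exp_mul_I]
  congr 1
  push_cast
  ring

lemma rinner_eq (x y x' y' : ℝ) (k l : ℕ) :
    rinner ![(x:ℂ) * ω ^ k, (y:ℂ) * ω ^ (11 * k)] ![(x':ℂ) * ω ^ l, (y':ℂ) * ω ^ (11 * l)] =
    (x * x') * Real.cos (π * ((k:ℝ) - l) / 30) + (y * y') * Real.cos (11 * (π * ((k:ℝ) - l) / 30)) := by
  rw [show π * ((k:ℝ) - l) / 30 = π * k / 30 - π * l / 30 by ring,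
    show 11 * (π * (k:ℝ) / 30 - π * l / 30) = π * (11 * k : ℕ) / 30 - π * (11 * l : ℕ) / 30 by
      push_cast; ring, Real.cos_sub, Real.cos_sub]
  unfold rinner
  simp only [Fin.sum_univ_two, Matrix.cons_val_zero, Matrix.cons_val_one, omega_pow]
  generalize π * ((11 * k : ℕ) : ℝ) / 30 = u1
  generalize π * ((11 * l : ℕ) : ℝ) / 30 = u2
  generalize π * (k : ℝ) / 30 = u3
  generalize π * (l : ℝ) / 30 = u4
  generalize Real.cos u1 = v1
  generalize Real.cos u2 = v2
  generalize Real.cos u3 = v3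
  generalize Real.cos u4 = v4
  generalize Real.sin u1 = w1
  generalize Real.sin u2 = w2
  generalize Real.sin u3 = w3
  generalize Real.sin u4 = w4
  simp
  ring

lemma rinner_comm (v w : Fin 2 → ℂ) : rinner v w = rinner w v := by
  unfold rinner
  simp [Fin.sum_univ_two]
  ring

lemma A_eq (n : Fin 30) : A n = ![((a:ℝ):ℂ) * ω ^ (2 * (n:ℕ)), ((d:ℝ):ℂ) * ω ^ (11 * (2 * (n:ℕ)))] := by
  unfold A; rw [show 22 * (n:ℕ) = 11 * (2 * n) by ring]
lemma B_eq (n : Fin 30) : B n = ![((b:ℝ):ℂ) * ω ^ (2 * (n:ℕ) + 1), ((c:ℝ):ℂ) * ω ^ (11 * (2 * (n:ℕ) + 1))] := by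
  unfold B; rw [show 22 * (n:ℕ) + 11 = 11 * (2 * n + 1) by ring]
lemma C_eq (n : Fin 30) : C n = ![((c:ℝ):ℂ) * ω ^ (2 * (n:ℕ) + 1), ((-b:ℝ):ℂ) * ω ^ (11 * (2 * (n:ℕ) + 1))] := by
  unfold C; rw [show 22 * (n:ℕ) + 11 = 11 * (2 * n + 1) by ring]; push_cast; rw [neg_mul]
lemma D_eq (n : Fin 30) : D n = ![((d:ℝ):ℂ) * ω ^ (2 * (n:ℕ)), ((-a:ℝ):ℂ) * ω ^ (11 * (2 * (n:ℕ)))] := by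
  unfold D; rw [show 22 * (n:ℕ) = 11 * (2 * n) by ring]; push_cast; rw [neg_mul]

lemma gAA (n m : Fin 30) : Good (rinner (A n) (A m)) := by
  rw [A_eq, A_eq, rinner_eq]
  have := (goodAA ((n:ℕ) - (m:ℕ))).1
  convert this using 5 <;> (push_cast; ring)
lemma gDD (n m : Fin 30) : Good (rinner (D n) (D m)) := by
  rw [D_eq, D_eq, rinner_eq, neg_mul_neg]
  have := (goodAA ((n:ℕ) - (m:ℕ))).2
  convert this using 5 <;> (push_cast; ring)
lemma gAD (n m : Fin 30) : Good (rinner (A n) (D m)) := by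
  rw [A_eq, D_eq, rinner_eq, mul_neg, mul_comm d a]
  have := (goodAD ((n:ℕ) - (m:ℕ))).1
  convert this using 5 <;> (push_cast; ring)
lemma gBB (n m : Fin 30) : Good (rinner (B n) (B m)) := by
  rw [B_eq, B_eq, rinner_eq]
  have := (goodBB ((n:ℕ) - (m:ℕ))).1
  convert this using 5 <;> (push_cast; ring)
lemma gCC (n m : Fin 30) : Good (rinner (C n) (C m)) := by
  rw [C_eq, C_eq, rinner_eq, neg_mul_neg]
  have := (goodBB ((n:ℕ) - (m:ℕ))).2
  convert this using 5 <;> (push_cast; ring)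
lemma gBC (n m : Fin 30) : Good (rinner (B n) (C m)) := by
  rw [B_eq, C_eq, rinner_eq, mul_neg, mul_comm c b]
  have := (goodBC ((n:ℕ) - (m:ℕ))).1
  convert this using 5 <;> (push_cast; ring)
lemma gBA (n m : Fin 30) : Good (rinner (B n) (A m)) := by
  rw [B_eq, A_eq, rinner_eq, mul_comm b a]
  have := (goodAB ((n:ℕ) - (m:ℕ))).1
  convert this using 5 <;> (push_cast; ring)
lemma gCA (n m : Fin 30) : Good (rinner (C n) (A m)) := by
  rw [C_eq, A_eq, rinner_eq, mul_comm c a, neg_mul]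
  have := (goodAC ((n:ℕ) - (m:ℕ))).1
  convert this using 5 <;> (push_cast; ring)
lemma gBD (n m : Fin 30) : Good (rinner (B n) (D m)) := by
  rw [B_eq, D_eq, rinner_eq]
  have := good_neg (goodAC ((n:ℕ) - (m:ℕ))).2
  have e : ((2 * (n:ℕ) + 1 : ℕ) : ℝ) - ((2 * (m:ℕ) : ℕ) : ℝ) = 2 * (((n:ℕ) - (m:ℕ) : ℤ) : ℝ) + 1 := by
    push_cast; ring
  rw [e]
  convert this using 1
  ring
lemma gCD (n m : Fin 30) : Good (rinner (C n) (D m)) := by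
  rw [C_eq, D_eq, rinner_eq, neg_mul_neg, mul_comm b a]
  have := (goodAB ((n:ℕ) - (m:ℕ))).2
  convert this using 5 <;> (push_cast; ring)

/-- inner products of members of T lie in
{−1, −τ/2, −1/2, −(τ−1)/2, 0, (τ−1)/2, 1/2, τ/2, 1}. -/
theorem stmt19 :
    ∀ v ∈ T, ∀ w ∈ T, rinner v w ∈
      ({-1, -(τ/2), -(1/2), -((τ-1)/2), 0, (τ-1)/2, 1/2, τ/2, 1} : Set ℝ) := by
  rintro v ⟨n, rfl | rfl | rfl | rfl⟩ w ⟨m, rfl | rfl | rfl | rfl⟩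
  · exact gAA n m
  · rw [rinner_comm]; exact gBA m n
  · rw [rinner_comm]; exact gCA m n
  · exact gAD n m
  · exact gBA n m
  · exact gBB n m
  · exact gBC n m
  · exact gBD n m
  · exact gCA n m
  · rw [rinner_comm]; exact gBC m n
  · exact gCC n m
  · exact gCD n m
  · rw [rinner_comm]; exact gAD m n
  · rw [rinner_comm]; exact gBD m n
  · rw [rinner_comm]; exact gCD m n
  · exact gDD n m

end Triacontagonal
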